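/- Let (N,B) be an even nondegenerate lattice, D ∈ N a primitive element, and let r ≥ 1, c, s be integers with gcd(r,c,s) = 1. Assume that for every nonzero L ∈ N, the product r·div(L) divides 2c·B(D,L). Then r divides c²·D² and gcd(r, c, c²D²/r − s) = 1; in other words, the class e = (r, cD, c²D²/r − s) is a well-defined (integral) primitive element of the Mukai lattice ℤ ⊕ N ⊕ ℤ. -/

import Mathlib

/-!
Primitivity of `D` yields a functional `f` with `f D = 1`, and nondegeneracy makes some nonzero
multiple `k • f` equal to `B L` for a lattice element `L`. Then `B L D = k` is, up to sign, the
divisibility of `L`, so condition (∗) for this single `L` says `r ∣ 2 * c`. Together with the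
evenness of `B D D` this gives `r * c ∣ c ^ 2 * B D D`, which is both the integrality of `e` and the
invariance of the gcd under replacing `s` by `c ^ 2 * B D D / r - s`.
-/

section Primitive

variable {R M : Type*}

/-- Primitive elements of a module: they are divisible only by units. Over `ℤ` these are the
primitive elements of a lattice. -/
def IsPrimitiveElement (R : Type*) {M : Type*} [Monoid R] [SMul R M] (x : M) : Prop :=
  ∀ (k : R) (y : M), x = k • y → IsUnit k

theorem isPrimitiveElement_int_iff [AddCommGroup M] {x : M} :
    IsPrimitiveElement ℤ x ↔ ∀ (k : ℤ) (y : M), x = k • y → k = 1 ∨ k = -1 := by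
  simp only [IsPrimitiveElement, Int.isUnit_iff]

theorem exists_eq_smul_of_forall_dual_dvd [CommSemiring R] [AddCommMonoid M] [Module R M]
    [Module.Free R M] {x : M} {g : R} (hg : ∀ f : Module.Dual R M, g ∣ f x) :
    ∃ y : M, x = g • y := by
  let b := Module.Free.chooseBasis R M
  choose a ha using fun i ↦ hg (b.coord i)
  refine ⟨∑ i ∈ (b.repr x).support, a i • b i, ?_⟩
  calc
    x = ∑ i ∈ (b.repr x).support, b.repr x i • b i := (b.linearCombination_repr x).symm
    _ = ∑ i ∈ (b.repr x).support, g • a i • b i :=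
      Finset.sum_congr rfl fun i _ ↦ by rw [← b.coord_apply, ha, mul_smul]
    _ = g • ∑ i ∈ (b.repr x).support, a i • b i := Finset.smul_sum.symm

variable [CommRing R] [IsPrincipalIdealRing R] [AddCommGroup M] [Module R M] [Module.Free R M]

theorem IsPrimitiveElement.exists_dual_eq_one {x : M} (hx : IsPrimitiveElement R x) :
    ∃ f : Module.Dual R M, f x = 1 := by
  let values : Ideal R := LinearMap.range (Module.Dual.eval R M x)
  let g := Submodule.IsPrincipal.generator values
  have g_dvd (f : Module.Dual R M) : g ∣ f x :=
    (Submodule.IsPrincipal.mem_iff_generator_dvd values).mp ⟨f, rfl⟩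
  obtain ⟨y, hy⟩ := exists_eq_smul_of_forall_dual_dvd g_dvd
  have values_eq_top : values = ⊤ :=
    values.eq_top_of_isUnit_mem (Submodule.IsPrincipal.generator_mem values) (hx g y hy)
  exact (Ideal.eq_top_iff_one values).mp values_eq_top

theorem IsPrimitiveElement.dvd_of_smul_eq_smul {x y : M} (hx : IsPrimitiveElement R x) {c k : R}
    (h : c • x = k • y) : k ∣ c := by
  obtain ⟨f, hf⟩ := hx.exists_dual_eq_one
  exact ⟨f y, by simpa [hf] using congrArg f h⟩

theorem IsPrimitiveElement.mk_smul {x : M} (hx : IsPrimitiveElement R x) {a b c : R}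
    (h : ∀ k, k ∣ a → k ∣ c → k ∣ b → IsUnit k) :
    IsPrimitiveElement R ((a, c • x, b) : R × M × R) := by
  rintro k ⟨a', y, b'⟩ e
  simp only [Prod.smul_mk, Prod.mk.injEq, smul_eq_mul] at e
  obtain ⟨ha, hy, hb⟩ := e
  exact h k ⟨a', ha⟩ (hx.dvd_of_smul_eq_smul hy) ⟨b', hb⟩

end Primitive

section Representability

variable {R M M' : Type*} [CommRing R] [IsDomain R] [AddCommGroup M] [Module R M]

theorem exists_ne_zero_smul_mem_range_of_injective [AddCommGroup M'] [Module R M']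
    [Module.Finite R M'] {f : M →ₗ[R] M'} (hf : Function.Injective f)
    (hrank : Module.finrank R M' ≤ Module.finrank R M) (y : M') :
    ∃ k : R, k ≠ 0 ∧ k • y ∈ LinearMap.range f := by
  have finrank_quotient : Module.finrank R (M' ⧸ LinearMap.range f) = 0 := by
    have := Submodule.finrank_quotient_add_finrank (LinearMap.range f)
    rw [LinearMap.finrank_range_of_inj hf] at this
    lia
  obtain ⟨k, hk⟩ := Module.finrank_eq_zero_iff_isTorsion.mp finrank_quotient
    (x := Submodule.Quotient.mk y)
  exact ⟨k, nonZeroDivisors.coe_ne_zero k, (Submodule.Quotient.mk_eq_zero _).mp hk⟩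

variable [Module.Free R M] [Module.Finite R M]

theorem exists_ne_zero_apply_eq_smul {B : LinearMap.BilinForm R M} (hB : B.SeparatingLeft)
    (f : Module.Dual R M) : ∃ (L : M) (k : R), k ≠ 0 ∧ B L = k • f := by
  have B_injective : Function.Injective B :=
    LinearMap.ker_eq_bot.mp (LinearMap.separatingLeft_iff_ker_eq_bot.mp hB)
  have finrank_dual : Module.finrank R (Module.Dual R M) = Module.finrank R M := by
    rw [Module.finrank_linearMap, Module.finrank_self, mul_one]
  obtain ⟨k, hk, L, hL⟩ :=
    exists_ne_zero_smul_mem_range_of_injective B_injective finrank_dual.le f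
  exact ⟨L, k, hk, hL⟩

theorem IsPrimitiveElement.exists_apply_ne_zero_forall_apply_dvd [IsPrincipalIdealRing R]
    {x : M} (hx : IsPrimitiveElement R x) {B : LinearMap.BilinForm R M} (hB : B.SeparatingLeft) :
    ∃ L : M, B L x ≠ 0 ∧ ∀ y, B L x ∣ B L y := by
  obtain ⟨f, hf⟩ := hx.exists_dual_eq_one
  obtain ⟨L, k, hk, hL⟩ := exists_ne_zero_apply_eq_smul hB f
  have apply_x : B L x = k := by simp [hL, hf]
  exact ⟨L, apply_x ▸ hk, fun y ↦ ⟨f y, by rw [apply_x, hL, LinearMap.smul_apply, smul_eq_mul]⟩⟩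

theorem IsPrimitiveElement.exists_apply_pos_forall_apply_dvd {N : Type*} [AddCommGroup N]
    [Module.Free ℤ N] [Module.Finite ℤ N] {x : N} (hx : IsPrimitiveElement ℤ x)
    {B : LinearMap.BilinForm ℤ N} (hB : B.SeparatingLeft) :
    ∃ L : N, 0 < B L x ∧ ∀ y, B L x ∣ B L y := by
  obtain ⟨L, hL, L_dvd⟩ := hx.exists_apply_ne_zero_forall_apply_dvd hB
  rcases hL.lt_or_gt with neg | pos
  · exact ⟨-L, by simpa using neg, by simpa using L_dvd⟩
  · exact ⟨L, pos, L_dvd⟩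

end Representability

theorem mul_dvd_sq_mul_of_dvd_two_mul {R : Type*} [CommSemiring R] {r c q : R}
    (hr : r ∣ 2 * c) (hq : 2 ∣ q) : r * c ∣ c ^ 2 * q := by
  obtain ⟨u, rfl⟩ := hq
  calc
    r * c ∣ 2 * c * c := mul_dvd_mul_right hr c
    _ ∣ 2 * c * c * u := dvd_mul_right _ u
    _ = c ^ 2 * (2 * u) := by ring

/-- Under the paper's condition (∗), the class `e = (r, cD, c²D²/r − s)` is a
well-defined integral and primitive element of the Mukai lattice `ℤ ⊕ N ⊕ ℤ`:
`r ∣ c²D²` and `gcd(r, c, c²D²/r − s) = 1`. -/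
theorem condition_star_implies_e_integral_primitive
    {N : Type*} [AddCommGroup N] [Module.Free ℤ N] [Module.Finite ℤ N]
    (B : LinearMap.BilinForm ℤ N)
    (hSymm : ∀ x y : N, B x y = B y x)
    (hEven : ∀ x : N, 2 ∣ B x x)
    (hNondeg : ∀ x : N, (∀ y : N, B x y = 0) → x = 0)
    (D : N) (hDprim : ∀ (k : ℤ) (y : N), D = k • y → k = 1 ∨ k = -1)
    (r c s : ℤ) (hr : 1 ≤ r)
    (hgcd : Int.gcd (Int.gcd r c : ℤ) s = 1)
    (hstar : ∀ (L : N), L ≠ 0 → ∀ m : ℤ, 0 ≤ m →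
      (∀ y : N, m ∣ B L y) → (∃ y : N, B L y = m) →
      (r * m) ∣ 2 * c * B D L) :
    r ∣ c ^ 2 * B D D ∧
    Int.gcd (Int.gcd r c : ℤ) (c ^ 2 * B D D / r - s) = 1 ∧
    (∀ (k : ℤ) (w : ℤ × N × ℤ),
      ((r, c • D, c ^ 2 * B D D / r - s) : ℤ × N × ℤ) = k • w →
      k = 1 ∨ k = -1) := by
  have D_primitive : IsPrimitiveElement ℤ D := isPrimitiveElement_int_iff.mpr hDprim
  obtain ⟨L, L_pos, L_dvd⟩ := D_primitive.exists_apply_pos_forall_apply_dvd hNondeg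
  have L_ne_zero : L ≠ 0 := by
    rintro rfl
    simp at L_pos
  have r_dvd : r ∣ 2 * c := by
    have star_L := hstar L L_ne_zero (B L D) L_pos.le L_dvd ⟨D, rfl⟩
    rw [hSymm D L] at star_L
    exact Int.dvd_of_mul_dvd_mul_right L_pos.ne' star_L
  have mul_dvd : r * c ∣ c ^ 2 * B D D := mul_dvd_sq_mul_of_dvd_two_mul r_dvd (hEven D)
  have c_dvd : c ∣ c ^ 2 * B D D / r := Int.dvd_ediv_of_mul_dvd mul_dvd
  have gcd_eq_one : Int.gcd (Int.gcd r c : ℤ) (c ^ 2 * B D D / r - s) = 1 := by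
    rwa [Int.gcd_sub_left_right_of_dvd s ((Int.gcd_dvd_right r c).trans c_dvd)]
  refine ⟨dvd_of_mul_right_dvd mul_dvd, gcd_eq_one,
    isPrimitiveElement_int_iff.mp (D_primitive.mk_smul fun k hkr hkc hke ↦ ?_)⟩
  have k_dvd_gcd := Int.dvd_coe_gcd (Int.dvd_coe_gcd hkr hkc) hke
  exact isUnit_of_dvd_one (by simpa [gcd_eq_one] using k_dvd_gcd)
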